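/- arXiv:2108.07088 — 3 statements merged into one kernel-verified Lean document; each statement's English description precedes it below -/
import Mathlib

section
/- Let m ∈ ℕ and let a, v ∈ ℝ^m satisfy the componentwise sign condition (sign(a_l) = sign(v_l) for every component l). Then there exists a symmetric positive semidefinite matrix D ∈ ℝ^{m×m} such that D v = 2 a. (Hence the optimized numerical diffusion term of the paper, ½ D v = a, is realized by a genuine symmetric positive semidefinite dissipation operator whenever the flux sign stability condition holds.) -/
/-! A symmetric positive semidefinite `D` with `D v = b` exists as soon as `b = 0` or `0 < ⟨b, v⟩`:
the rank-one matrix `⟨b, v⟩⁻¹ b bᵀ` sends `v` to `b`. The sign condition enters only through this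
inner product, since it makes every summand `a l * v l` positive unless `a l = 0`. -/

open Matrix

theorem starOrderedRing_inv_nonneg {R : Type*} [DivisionRing R] [PartialOrder R] [StarRing R]
    [StarOrderedRing R] {c : R} (hc : 0 ≤ c) : 0 ≤ c⁻¹ := by
  have h_conj : star c⁻¹ * c * c⁻¹ = c⁻¹ := by
    rw [star_inv₀, (IsSelfAdjoint.of_nonneg hc).star_eq]
    simpa only [inv_inv] using mul_inv_mul_cancel c⁻¹
  exact h_conj ▸ star_left_conjugate_nonneg hc c⁻¹

theorem exists_posSemidef_mulVec_eq {n R : Type*} [Fintype n] [Field R] [PartialOrder R]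
    [StarRing R] [StarOrderedRing R] {b v : n → R} (h : b = 0 ∨ 0 < star b ⬝ᵥ v) :
    ∃ D : Matrix n n R, D.PosSemidef ∧ D *ᵥ v = b := by
  rcases h with rfl | h_pos
  · exact ⟨0, .zero, zero_mulVec v⟩
  · refine ⟨(star b ⬝ᵥ v)⁻¹ • vecMulVec b (star b),
      (posSemidef_vecMulVec_self_star b).smul (starOrderedRing_inv_nonneg h_pos.le), ?_⟩
    rw [smul_mulVec, vecMulVec_mulVec, op_smul_eq_smul, inv_smul_smul₀ h_pos.ne']

theorem eq_zero_or_dotProduct_pos {n R : Type*} [Fintype n] [NonUnitalNonAssocSemiring R]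
    [PartialOrder R] [IsOrderedCancelAddMonoid R] {a v : n → R}
    (h : ∀ i, a i ≠ 0 → 0 < a i * v i) : a = 0 ∨ 0 < a ⬝ᵥ v := by
  have h_nonneg (i : n) : 0 ≤ a i * v i := by
    by_cases hi : a i = 0
    · rw [hi, zero_mul]
    · exact (h i hi).le
  refine or_iff_not_imp_left.mpr fun ha => ?_
  obtain ⟨i, hi⟩ := Function.ne_iff.mp ha
  exact Finset.sum_pos' (fun j _ => h_nonneg j) ⟨i, Finset.mem_univ i, h i hi⟩

theorem mul_pos_of_real_sign_eq {x y : ℝ} (h : Real.sign x = Real.sign y) (hx : x ≠ 0) :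
    0 < x * y := by
  have hy : y ≠ 0 := by rwa [← Real.sign_eq_zero_iff.ne, ← h, Real.sign_eq_zero_iff.ne]
  have h_prod : 0 < (Real.sign x * x) * (Real.sign y * y) :=
    mul_pos (Real.sign_mul_pos_of_ne_zero x hx) (Real.sign_mul_pos_of_ne_zero y hy)
  rw [h, mul_mul_mul_comm] at h_prod
  exact pos_of_mul_pos_right h_prod (mul_self_nonneg _)

theorem exists_symm_psd_realizing_diffusion_general {n : Type*} [Fintype n] (a v : n → ℝ)
    (h : a = 0 ∨ 0 < a ⬝ᵥ v) :
    ∃ D : Matrix n n ℝ, D.IsSymm ∧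
      (∀ x : n → ℝ, 0 ≤ ∑ l, x l * D.mulVec x l) ∧
      D.mulVec v = fun l => 2 * a l := by
  obtain ⟨D, hD, hDv⟩ := exists_posSemidef_mulVec_eq h
  have hD_two : ((2 : ℝ) • D).PosSemidef := hD.smul zero_le_two
  refine ⟨(2 : ℝ) • D, isHermitian_iff_isSymm.mp hD_two.isHermitian,
    hD_two.dotProduct_mulVec_nonneg, ?_⟩
  rw [smul_mulVec, hDv]
  rfl

/-- If `a, v : ℝ^m` satisfy the componentwise sign condition, then there
exists a symmetric positive semidefinite matrix `D` with `D v = 2 a`. -/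
theorem exists_symm_psd_realizing_diffusion (m : ℕ) (a v : Fin m → ℝ)
    (hsign : ∀ l, Real.sign (a l) = Real.sign (v l)) :
    ∃ D : Matrix (Fin m) (Fin m) ℝ, D.IsSymm ∧
      (∀ x : Fin m → ℝ, 0 ≤ ∑ l, x l * D.mulVec x l) ∧
      D.mulVec v = fun l => 2 * a l :=
  exists_symm_psd_realizing_diffusion_general a v <|
    eq_zero_or_dotProduct_pos fun l => mul_pos_of_real_sign_eq (hsign l)
end

section
/- (Flux sign stability lemma.) Let m ∈ ℕ, let Δv, Δu ∈ ℝ^m satisfy the componentwise sign condition sign(Δv_l) = sign(Δu_l) for every l, let D ∈ ℝ^{m×m}, and let F, F* ∈ ℝ^m be related by F = F* − ½ D Δv. If F* − F and Δu satisfy the componentwise sign condition (sign((F* − F)_l) = sign(Δu_l) for every l), then the quadratic form Δvᵀ D Δv is nonnegative; i.e., the dissipation operator D acts nonnegatively on the entropy-variable jump, so the flux F is entropy stable. -/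
section OrderedRing

variable {R : Type*} [Ring R] [LinearOrder R] [IsStrictOrderedRing R]

theorem sign_mul_of_pos_left {c : R} (hc : 0 < c) (a : R) :
    SignType.sign (c * a) = SignType.sign a := by
  rw [sign_mul, sign_pos hc, one_mul]

theorem mul_nonneg_of_sign_eq {a b : R} (h : SignType.sign a = SignType.sign b) :
    0 ≤ a * b := by
  have sign_prod : SignType.sign (a * b) = SignType.sign (b * b) := by
    rw [sign_mul, sign_mul, h]
  rw [← sign_nonneg_iff, sign_prod, sign_nonneg_iff]
  exact mul_self_nonneg b

theorem dotProduct_nonneg_of_sign_eq {ι : Type*} [Fintype ι] {v w : ι → R}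
    (h : ∀ i, SignType.sign (v i) = SignType.sign (w i)) : 0 ≤ v ⬝ᵥ w :=
  Finset.sum_nonneg fun i _ ↦ mul_nonneg_of_sign_eq (h i)

end OrderedRing

theorem signType_sign_realSign (r : ℝ) : SignType.sign (Real.sign r) = SignType.sign r := by
  rcases lt_trichotomy r 0 with hneg | rfl | hpos
  · rw [Real.sign_of_neg hneg, sign_neg hneg, sign_neg neg_one_lt_zero]
  · rw [Real.sign_zero]
  · rw [Real.sign_of_pos hpos, sign_pos hpos, sign_one]

theorem signType_sign_eq_of_realSign_eq {a b : ℝ} (h : Real.sign a = Real.sign b) :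
    SignType.sign a = SignType.sign b := by
  rw [← signType_sign_realSign a, h, signType_sign_realSign b]

theorem flux_sign_stability_general {ι K : Type*} [Fintype ι] [DivisionRing K] [LinearOrder K]
    [IsStrictOrderedRing K] {Δv Δu : ι → K}
    (hsign : ∀ l, SignType.sign (Δv l) = SignType.sign (Δu l))
    {D : Matrix ι ι K} {F Fstar : ι → K} (hF : F = Fstar - (1 / 2 : K) • D.mulVec Δv)
    (hsignF : ∀ l, SignType.sign ((Fstar - F) l) = SignType.sign (Δu l)) :
    0 ≤ Δv ⬝ᵥ D.mulVec Δv := by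
  have flux_diff : Fstar - F = (1 / 2 : K) • D.mulVec Δv := by rw [hF, sub_sub_cancel]
  have sign_flux_diff (l : ι) :
      SignType.sign ((Fstar - F) l) = SignType.sign (D.mulVec Δv l) := by
    rw [flux_diff]
    exact sign_mul_of_pos_left (one_div_pos.mpr two_pos) _
  refine dotProduct_nonneg_of_sign_eq fun l ↦ ?_
  calc SignType.sign (Δv l) = SignType.sign (Δu l) := hsign l
    _ = SignType.sign ((Fstar - F) l) := (hsignF l).symm
    _ = SignType.sign (D.mulVec Δv l) := sign_flux_diff l

/-- Flux sign stability lemma: if `sign (Δv l) = sign (Δu l)` for all `l`,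
`F = F* - ½ D Δv`, and `F* - F` and `Δu` satisfy the componentwise sign condition, then
the quadratic form `Δvᵀ D Δv` is nonnegative. -/
theorem flux_sign_stability (m : ℕ) (Δv Δu : Fin m → ℝ)
    (hsign : ∀ l, Real.sign (Δv l) = Real.sign (Δu l))
    (D : Matrix (Fin m) (Fin m) ℝ) (F Fstar : Fin m → ℝ)
    (hF : F = Fstar - (1/2 : ℝ) • D.mulVec Δv)
    (hsignF : ∀ l, Real.sign ((Fstar - F) l) = Real.sign (Δu l)) :
    0 ≤ ∑ l, Δv l * D.mulVec Δv l :=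
  flux_sign_stability_general (fun l ↦ signType_sign_eq_of_realSign_eq (hsign l)) hF
    fun l ↦ signType_sign_eq_of_realSign_eq (hsignF l)
end

section
/- (Discrete entropy conservation identity, algebraic core of Tadmor's theorem.) Let m ∈ ℕ and let v_{i−1}, v_i, v_{i+1} ∈ ℝ^m, ψ_{i−1}, ψ_i, ψ_{i+1} ∈ ℝ. Suppose F₊, F₋ ∈ ℝ^m satisfy ⟨v_{i+1} − v_i, F₊⟩ = ψ_{i+1} − ψ_i and ⟨v_i − v_{i−1}, F₋⟩ = ψ_i − ψ_{i−1}. Define q₊ = ⟨(v_i + v_{i+1})/2, F₊⟩ − (ψ_i + ψ_{i+1})/2 and q₋ = ⟨(v_{i−1} + v_i)/2, F₋⟩ − (ψ_{i−1} + ψ_i)/2. Then ⟨v_i, F₊ − F₋⟩ = q₊ − q₋. -/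
/-!
Tadmor's condition says that `⟨v, F⟩ - ψ` takes the same value at the two ends of an interface, and
the numerical entropy flux is the mean of these two values. In the cell between two interfaces, both
entropy fluxes can therefore be evaluated at the data of that cell, where the potential cancels.
-/

section EntropyConservativeFlux

variable {R V W : Type*} [CommRing R] [AddCommGroup V] [AddCommGroup W] [Module R V] [Module R W]

/-- Tadmor's condition `⟨vR - vL, F⟩ = ψR - ψL` for the flux `F` across an interface with entropy
variables `vL`, `vR` and entropy potentials `ψL`, `ψR`. Entropy variables and fluxes live in two
modules paired by `B`; on `ℝ^m` this pairing is the dot product. -/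
def IsEntropyConservativeFlux (B : V →ₗ[R] W →ₗ[R] R) (vL vR : V) (ψL ψR : R) (F : W) : Prop :=
  B (vR - vL) F = ψR - ψL

/-- The numerical entropy flux `⟨(vL + vR) / 2, F⟩ - (ψL + ψR) / 2` associated with the flux `F`
across an interface, the means being taken as midpoints so that only `2` has to be invertible. -/
def numericalEntropyFlux [Invertible (2 : R)] (B : V →ₗ[R] W →ₗ[R] R) (vL vR : V) (ψL ψR : R)
    (F : W) : R :=
  B (midpoint R vL vR) F - midpoint R ψL ψR

theorem numericalEntropyFlux_eq_midpoint [Invertible (2 : R)] (B : V →ₗ[R] W →ₗ[R] R) (vL vR : V)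
    (ψL ψR : R) (F : W) :
    numericalEntropyFlux B vL vR ψL ψR F = midpoint R (B vL F - ψL) (B vR F - ψR) := by
  have map_midpoint : B (midpoint R vL vR) F = midpoint R (B vL F) (B vR F) :=
    (B.flip F).toAffineMap.map_midpoint vL vR
  rw [numericalEntropyFlux, map_midpoint]
  exact midpoint_vsub_midpoint (B vL F) (B vR F) ψL ψR

theorem isEntropyConservativeFlux_dotProductBilin_iff {ι : Type*} [Fintype ι] {vL vR : ι → R}
    {ψL ψR : R} {F : ι → R} :
    IsEntropyConservativeFlux (dotProductBilin R R) vL vR ψL ψR F ↔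
      ∑ l, (vR l - vL l) * F l = ψR - ψL :=
  Iff.rfl

theorem numericalEntropyFlux_dotProductBilin {ι K : Type*} [Fintype ι] [Field K]
    [Invertible (2 : K)] (vL vR : ι → K) (ψL ψR : K) (F : ι → K) :
    numericalEntropyFlux (dotProductBilin K K) vL vR ψL ψR F =
      (∑ l, (vL l + vR l) / 2 * F l) - (ψL + ψR) / 2 := by
  simp only [numericalEntropyFlux, dotProductBilin_apply_apply, dotProduct,
    midpoint_eq_smul_add, Pi.smul_apply, Pi.add_apply, smul_eq_mul, invOf_eq_inv, div_eq_inv_mul]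

namespace IsEntropyConservativeFlux

variable {B : V →ₗ[R] W →ₗ[R] R} {vL vR : V} {ψL ψR : R} {F : W}

theorem apply_sub_eq_apply_sub (h : IsEntropyConservativeFlux B vL vR ψL ψR F) :
    B vL F - ψL = B vR F - ψR := by
  rw [IsEntropyConservativeFlux, map_sub, LinearMap.sub_apply] at h
  linear_combination -h

theorem numericalEntropyFlux_eq_left [Invertible (2 : R)]
    (h : IsEntropyConservativeFlux B vL vR ψL ψR F) :
    numericalEntropyFlux B vL vR ψL ψR F = B vL F - ψL := by
  rw [numericalEntropyFlux_eq_midpoint, ← h.apply_sub_eq_apply_sub, midpoint_self]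

theorem numericalEntropyFlux_eq_right [Invertible (2 : R)]
    (h : IsEntropyConservativeFlux B vL vR ψL ψR F) :
    numericalEntropyFlux B vL vR ψL ψR F = B vR F - ψR :=
  h.numericalEntropyFlux_eq_left.trans h.apply_sub_eq_apply_sub

end IsEntropyConservativeFlux

theorem discrete_entropy_conservation_identity_general [Invertible (2 : R)]
    {B : V →ₗ[R] W →ₗ[R] R} {vm vi vp : V} {ψm ψi ψp : R} {Fp Fm : W}
    (hFp : IsEntropyConservativeFlux B vi vp ψi ψp Fp)
    (hFm : IsEntropyConservativeFlux B vm vi ψm ψi Fm) :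
    B vi (Fp - Fm) =
      numericalEntropyFlux B vi vp ψi ψp Fp - numericalEntropyFlux B vm vi ψm ψi Fm := by
  rw [hFp.numericalEntropyFlux_eq_left, hFm.numericalEntropyFlux_eq_right,
    sub_sub_sub_cancel_right, map_sub]

end EntropyConservativeFlux

/-- Discrete entropy conservation identity: with entropy conservative
fluxes `F₊, F₋` at the two interfaces and the associated numerical entropy fluxes
`q₊, q₋`, one has `⟨v_i, F₊ - F₋⟩ = q₊ - q₋`. -/
theorem discrete_entropy_conservation_identity (m : ℕ)
    (vm vi vp : Fin m → ℝ) (ψm ψi ψp : ℝ) (Fp Fm : Fin m → ℝ)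
    (hFp : ∑ l, (vp l - vi l) * Fp l = ψp - ψi)
    (hFm : ∑ l, (vi l - vm l) * Fm l = ψi - ψm)
    (qp qm : ℝ)
    (hqp : qp = (∑ l, ((vi l + vp l) / 2) * Fp l) - (ψi + ψp) / 2)
    (hqm : qm = (∑ l, ((vm l + vi l) / 2) * Fm l) - (ψm + ψi) / 2) :
    ∑ l, vi l * (Fp l - Fm l) = qp - qm := by
  rw [hqp, hqm, ← numericalEntropyFlux_dotProductBilin, ← numericalEntropyFlux_dotProductBilin]
  exact discrete_entropy_conservation_identity_general
    (isEntropyConservativeFlux_dotProductBilin_iff.mpr hFp)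
    (isEntropyConservativeFlux_dotProductBilin_iff.mpr hFm)
end
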